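/- Fix S ⊆ N and an initial state i ∈ N. For every feasible pair (x⁰, x¹) for i, Σ_j x¹_j = g_i^S − Σ_{j∈S} w_j^S x⁰_j + Σ_{j∉S} w_j^S x¹_j. (Proposition 3(a): decomposition of the work measure relative to the S-active policy.) -/

import Mathlib

open Matrix BigOperators
open scoped Classical

noncomputable section

/-- Transition matrix of the `S`-active policy: row `i` of `P` if `i ∈ S`,
the `i`-th standard unit row otherwise. -/
def PAct {N : Type*} [DecidableEq N] (P : Matrix N N ℝ) (S : Finset N) : Matrix N N ℝ :=
  fun i j => if i ∈ S then P i j else if i = j then 1 else 0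

/-- Transition matrix of the `Sᶜ`-active policy. -/
def PPas {N : Type*} [DecidableEq N] (P : Matrix N N ℝ) (S : Finset N) : Matrix N N ℝ :=
  fun i j => if i ∈ S then (if i = j then 1 else 0) else P i j

/-- Basis matrix `B^S = I - β P^S`. -/
def BMat {N : Type*} [Fintype N] [DecidableEq N] (β : ℝ) (P : Matrix N N ℝ) (S : Finset N) :
    Matrix N N ℝ := 1 - β • PAct P S

/-- Non-basic matrix `N^S = I - β P^{Sᶜ}`. -/
def NMat {N : Type*} [Fintype N] [DecidableEq N] (β : ℝ) (P : Matrix N N ℝ) (S : Finset N) :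
    Matrix N N ℝ := 1 - β • PPas P S

/-- Basis inverse `H^S = (B^S)⁻¹`. -/
def HMat {N : Type*} [Fintype N] [DecidableEq N] (β : ℝ) (P : Matrix N N ℝ) (S : Finset N) :
    Matrix N N ℝ := (BMat β P S)⁻¹

/-- Tableau matrix `A^S = N^S · H^S`. -/
def AMat {N : Type*} [Fintype N] [DecidableEq N] (β : ℝ) (P : Matrix N N ℝ) (S : Finset N) :
    Matrix N N ℝ := NMat β P S * HMat β P S

/-- Work measure `g^S = H^S · 1_S`. -/
def gWork {N : Type*} [Fintype N] [DecidableEq N] (β : ℝ) (P : Matrix N N ℝ) (S : Finset N) :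
    N → ℝ := (HMat β P S).mulVec (fun j => if j ∈ S then 1 else 0)

/-- Reward measure `f^S = H^S · (R·1_S)`. -/
def fRew {N : Type*} [Fintype N] [DecidableEq N] (β : ℝ) (P : Matrix N N ℝ) (R : N → ℝ)
    (S : Finset N) : N → ℝ := (HMat β P S).mulVec (fun j => if j ∈ S then R j else 0)

/-- Marginal work `w_i^S`. -/
def wMarg {N : Type*} [Fintype N] [DecidableEq N] (β : ℝ) (P : Matrix N N ℝ) (S : Finset N)
    (i : N) : ℝ :=
  if i ∈ S then (1 - β) * gWork β P S i
  else 1 + β * ∑ j ∈ S, P i j * gWork β P S j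

/-- Marginal reward `r_i^S`. -/
def rMarg {N : Type*} [Fintype N] [DecidableEq N] (β : ℝ) (P : Matrix N N ℝ) (R : N → ℝ)
    (S : Finset N) (i : N) : ℝ :=
  if i ∈ S then (1 - β) * fRew β P R S i
  else R i + β * ∑ j ∈ S, P i j * fRew β P R S j

/-- Marginal productivity rate `ν_i^S = r_i^S / w_i^S`. -/
def nuMarg {N : Type*} [Fintype N] [DecidableEq N] (β : ℝ) (P : Matrix N N ℝ) (R : N → ℝ)
    (S : Finset N) (i : N) : ℝ := rMarg β P R S i / wMarg β P S i

/-- Feasibility of a pair of row vectors `(x⁰, x¹)` for initial state `i`: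
`x⁰, x¹ ≥ 0` and `(1-β) x⁰ + x¹ (I - β P) = e_i`. -/
def Feasible {N : Type*} [Fintype N] [DecidableEq N] (β : ℝ) (P : Matrix N N ℝ) (i : N)
    (x0 x1 : N → ℝ) : Prop :=
  (∀ j, 0 ≤ x0 j) ∧ (∀ j, 0 ≤ x1 j) ∧
    (1 - β) • x0 + Matrix.vecMul x1 (1 - β • P) = Pi.single i 1

/-- Modified reward vector `R̂ = R - (I - βP)·Q`. -/
def Rhat {N : Type*} [Fintype N] [DecidableEq N] (β : ℝ) (P : Matrix N N ℝ) (R Q : N → ℝ) :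
    N → ℝ := fun i => R i - ((1 - β • P).mulVec Q) i

/-!
The measure `f = H^S (R 1_S)` vanishes off `S` and satisfies `(1 - β) f = r^S 1_S` and
`(I - βP) f = R - r^S 1_{Sᶜ}`. Pairing the balance equation `(1 - β) x⁰ + x¹ (I - βP) = p` with `f`
therefore decomposes the reward `x¹ · R` for any reward vector `R` and any initial vector `p`. Work
is the case `R = 1`; the matrix `B^S` is invertible because it is strictly diagonally dominant.
-/

theorem isUnit_one_sub_smul_of_sum_norm_le_one {K ι : Type*} [NormedField K] [Fintype ι]
    [DecidableEq ι] {c : K} (hc : ‖c‖ < 1) {Q : Matrix ι ι K} (hQ : ∀ i, ∑ j, ‖Q i j‖ ≤ 1) :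
    IsUnit (1 - c • Q) := by
  rw [isUnit_iff_isUnit_det, isUnit_iff_ne_zero]
  refine det_ne_zero_of_sum_row_lt_diag fun k ↦ ?_
  have off_diag : ∑ j ∈ Finset.univ.erase k, ‖(1 - c • Q) k j‖
      = ‖c‖ * ∑ j ∈ Finset.univ.erase k, ‖Q k j‖ := by
    rw [Finset.mul_sum]
    refine Finset.sum_congr rfl fun j hj ↦ ?_
    simp [one_apply_ne (Finset.ne_of_mem_erase hj).symm]
  have row_sum : ‖Q k k‖ + ∑ j ∈ Finset.univ.erase k, ‖Q k j‖ ≤ 1 :=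
    (Finset.add_sum_erase _ (fun j ↦ ‖Q k j‖) (Finset.mem_univ k)).trans_le (hQ k)
  calc ∑ j ∈ Finset.univ.erase k, ‖(1 - c • Q) k j‖
      = ‖c‖ * ∑ j ∈ Finset.univ.erase k, ‖Q k j‖ := off_diag
    _ ≤ ‖c‖ * (1 - ‖Q k k‖) := by gcongr; linarith
    _ < 1 - ‖c‖ * ‖Q k k‖ := by linarith
    _ = ‖(1 : K)‖ - ‖c * Q k k‖ := by rw [norm_one, norm_mul]
    _ ≤ ‖1 - c * Q k k‖ := norm_sub_norm_le _ _
    _ = ‖(1 - c • Q) k k‖ := by simp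

section Policy

variable {N : Type*} [DecidableEq N] {P : Matrix N N ℝ} {S : Finset N} {i : N}

theorem PAct_of_mem (hi : i ∈ S) : PAct P S i = P i := by
  ext j
  simp [PAct, hi]

theorem PAct_of_notMem (hi : i ∉ S) : PAct P S i = Pi.single i 1 := by
  ext j
  simp [PAct, hi, Pi.single_apply, eq_comm]

variable [Fintype N] {β : ℝ}

theorem BMat_of_mem (hi : i ∈ S) : BMat β P S i = (1 - β • P) i := by
  ext j
  simp [BMat, PAct_of_mem hi]

theorem BMat_of_notMem (hi : i ∉ S) : BMat β P S i = Pi.single i (1 - β) := by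
  ext j
  obtain rfl | hij := eq_or_ne i j
  · simp [BMat, PAct_of_notMem hi]
  · simp [BMat, PAct_of_notMem hi, one_apply_ne hij, Pi.single_eq_of_ne' hij]

theorem BMat_mulVec_of_mem (hi : i ∈ S) (v : N → ℝ) :
    (BMat β P S *ᵥ v) i = ((1 - β • P) *ᵥ v) i := by
  rw [mulVec, mulVec, BMat_of_mem hi]

theorem BMat_mulVec_of_notMem (hi : i ∉ S) (v : N → ℝ) :
    (BMat β P S *ᵥ v) i = (1 - β) * v i := by
  rw [mulVec, BMat_of_notMem hi, single_dotProduct]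

theorem sum_norm_PAct_le_one (hP : ∀ i ∈ S, ∑ j, ‖P i j‖ ≤ 1) (i : N) :
    ∑ j, ‖PAct P S i j‖ ≤ 1 := by
  by_cases hi : i ∈ S
  · simpa only [PAct_of_mem hi] using hP i hi
  · simp [PAct_of_notMem hi, Pi.single_apply, apply_ite norm]

theorem isUnit_BMat (hβ : ‖β‖ < 1) (hP : ∀ i ∈ S, ∑ j, ‖P i j‖ ≤ 1) : IsUnit (BMat β P S) :=
  isUnit_one_sub_smul_of_sum_norm_le_one hβ (sum_norm_PAct_le_one hP)

theorem one_sub_ne_zero_of_isUnit_BMat (hB : IsUnit (BMat β P S)) (hi : i ∉ S) : 1 - β ≠ 0 := by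
  intro hβ
  refine ((isUnit_iff_isUnit_det _).mp hB).ne_zero (det_eq_zero_of_row_eq_zero i fun j ↦ ?_)
  simp [BMat_of_notMem hi, hβ]

end Policy

section Reward

variable {N : Type*} [Fintype N] [DecidableEq N] {P : Matrix N N ℝ} {β : ℝ} {S : Finset N}

theorem fRew_one : fRew β P 1 S = gWork β P S := rfl

theorem rMarg_one : rMarg β P 1 S = wMarg β P S := rfl

theorem BMat_mulVec_fRew (hB : IsUnit (BMat β P S)) (R : N → ℝ) :
    BMat β P S *ᵥ fRew β P R S = fun j ↦ if j ∈ S then R j else 0 := by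
  rw [fRew, HMat, mulVec_mulVec, mul_nonsing_inv _ ((isUnit_iff_isUnit_det _).mp hB), one_mulVec]

theorem fRew_of_notMem (hB : IsUnit (BMat β P S)) (R : N → ℝ) {i : N} (hi : i ∉ S) :
    fRew β P R S i = 0 := by
  have row_eq : (1 - β) * fRew β P R S i = 0 := by
    rw [← BMat_mulVec_of_notMem hi, BMat_mulVec_fRew hB]
    exact if_neg hi
  exact (mul_eq_zero.mp row_eq).resolve_left (one_sub_ne_zero_of_isUnit_BMat hB hi)

theorem sum_mem_mul_fRew (hB : IsUnit (BMat β P S)) (R : N → ℝ) (i : N) :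
    ∑ j ∈ S, P i j * fRew β P R S j = (P *ᵥ fRew β P R S) i :=
  Finset.sum_subset S.subset_univ fun j _ hj ↦ by rw [fRew_of_notMem hB R hj, mul_zero]

theorem one_sub_smul_fRew (hB : IsUnit (BMat β P S)) (R : N → ℝ) :
    (1 - β) • fRew β P R S = fun j ↦ if j ∈ S then rMarg β P R S j else 0 := by
  ext j
  by_cases hj : j ∈ S
  · simp [rMarg, hj]
  · simp [fRew_of_notMem hB R hj, hj]

theorem one_sub_smul_mulVec_fRew (hB : IsUnit (BMat β P S)) (R : N → ℝ) :
    (1 - β • P) *ᵥ fRew β P R S = R - fun j ↦ if j ∈ Sᶜ then rMarg β P R S j else 0 := by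
  ext j
  by_cases hj : j ∈ S
  · rw [← BMat_mulVec_of_mem hj, BMat_mulVec_fRew hB]
    simp [hj]
  · simp [sub_mulVec, smul_mulVec, rMarg, hj, fRew_of_notMem hB R hj, sum_mem_mul_fRew hB R]

theorem stmt4_general (hB : IsUnit (BMat β P S)) (R : N → ℝ) {p x0 x1 : N → ℝ}
    (hx : (1 - β) • x0 + x1 ᵥ* (1 - β • P) = p) :
    ∑ j, R j * x1 j
      = p ⬝ᵥ fRew β P R S - ∑ j ∈ S, rMarg β P R S j * x0 j
        + ∑ j ∈ Sᶜ, rMarg β P R S j * x1 j := by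
  have passive : ((1 - β) • x0) ⬝ᵥ fRew β P R S = ∑ j ∈ S, rMarg β P R S j * x0 j := by
    rw [smul_dotProduct, ← dotProduct_smul, one_sub_smul_fRew hB, dotProduct_comm]
    simp only [dotProduct, ite_mul, zero_mul, Finset.sum_ite_mem, Finset.univ_inter]
  have active : (x1 ᵥ* (1 - β • P)) ⬝ᵥ fRew β P R S
      = ∑ j, R j * x1 j - ∑ j ∈ Sᶜ, rMarg β P R S j * x1 j := by
    rw [← dotProduct_mulVec, one_sub_smul_mulVec_fRew hB, dotProduct_comm, sub_dotProduct]
    simp only [dotProduct, ite_mul, zero_mul, Finset.sum_ite_mem, Finset.univ_inter]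
  rw [← hx, add_dotProduct, passive, active]
  ring

end Reward

/-- Proposition 3(a): decomposition of the work measure relative to
the S-active policy. -/
theorem stmt4 {N : Type*} [Fintype N] [DecidableEq N] [Nonempty N]
    (P : Matrix N N ℝ) (hP0 : ∀ i j, 0 ≤ P i j) (hP1 : ∀ i, ∑ j, P i j = 1)
    (β : ℝ) (hβ0 : 0 < β) (hβ1 : β < 1)
    (S : Finset N) (i : N) (x0 x1 : N → ℝ) (hx : Feasible β P i x0 x1) :
    ∑ j, x1 j
      = gWork β P S i - ∑ j ∈ S, wMarg β P S j * x0 j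
        + ∑ j ∈ Sᶜ, wMarg β P S j * x1 j := by
  have hB : IsUnit (BMat β P S) := isUnit_BMat (by rwa [Real.norm_of_nonneg hβ0.le])
    fun i _ ↦ by simp only [Real.norm_of_nonneg (hP0 i _), hP1, le_refl]
  simpa [fRew_one, rMarg_one] using stmt4_general hB 1 hx.2.2
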